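/- arXiv:0904.3379 — 2 statements merged into one kernel-verified Lean document; each statement's English description precedes it below -/
import Mathlib

section
/- Let n ≥ 2 be an integer and let N, p be integers with 0 ≤ p ≤ N−1. Then for every sequence u : ℕ → ℂ, a^N_{2p+1}(u) = a^{p+1}_{2p+1}(u). -/
open Finset

/-- Generalized binomial coefficient `binom(x, k) = x(x-1)⋯(x-k+1)/k!` for real `x`. -/
noncomputable def rbinom (x : ℝ) (k : ℕ) : ℝ :=
  (∏ i ∈ Finset.range k, (x - i)) / (Nat.factorial k : ℝ)

/-- The constant `c_n = Γ((n−1)/2)/(2 π^{n/2} Γ(1/2))`. -/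
noncomputable def cConst (n : ℕ) : ℝ :=
  Real.Gamma (((n : ℝ) - 1) / 2) / (2 * Real.pi ^ ((n : ℝ) / 2) * Real.Gamma (1 / 2))

/-- The constant `γ_{2j+1} = i^{−(2j+1)} π^{n/2} Γ(j+1/2)/Γ(n/2+j+1/2)`. -/
noncomputable def gammaConst (n j : ℕ) : ℂ :=
  Complex.I ^ (-(2 * (j : ℤ) + 1)) * ((Real.pi ^ ((n : ℝ) / 2) : ℝ) : ℂ)
    * ((Real.Gamma ((j : ℝ) + 1 / 2) : ℝ) : ℂ)
    / ((Real.Gamma ((n : ℝ) / 2 + j + 1 / 2) : ℝ) : ℂ)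

/-- The coefficient `c_{N;L,j,k}`. -/
noncomputable def cCoef (n N L j k : ℕ) : ℂ :=
  Complex.I * (-1 : ℂ) ^ k * ((cConst n : ℝ) : ℂ) * gammaConst n j
    * (2 : ℂ) ^ k * (((N - j).factorial : ℝ) : ℂ) * ((n : ℂ) - 1)
    * ((rbinom ((L : ℝ) - 1 + (n : ℝ) / 2) (N - j) : ℝ) : ℂ)
    * ((rbinom ((n : ℝ) / 2 + j + L - N - 1) k : ℝ) : ℂ)
    * ((rbinom ((N : ℝ) + (n : ℝ) / 2 - 1 / 2) N : ℝ) : ℂ)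
    / ((((2 * N - L).factorial : ℝ) : ℂ)
        * (((L : ℝ) - N + (n : ℝ) / 2 - 1 / 2 : ℝ) : ℂ)
        * (((L - N - j - 1 - k).factorial : ℝ) : ℂ)
        * ((rbinom ((N : ℝ) - 1 / 2) N : ℝ) : ℂ))

/-- The coefficient `a^N_{2p+1}(u)`. -/
noncomputable def aCoef (n N p : ℕ) (u : ℕ → ℂ) : ℂ :=
  ∑ j ∈ Finset.range N, u j *
    ∑ s ∈ Finset.Icc (j + 1) N, ∑ k ∈ Finset.Icc (s - p - 1) (s - j - 1),
      cCoef n N (N + s) j k * (-1 : ℂ) ^ (p + 1 + k - s)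
        / ((((p + 1 + k - s).factorial : ℝ) : ℂ)
            * ((Real.Gamma ((n : ℝ) / 2 + s + p + 1) : ℝ) : ℂ)
            * (((2 : ℝ) ^ (2 * (p : ℝ) + 1 + (n : ℝ) / 2 + k) : ℝ) : ℂ))

theorem rbinom_eq_choose (x : ℝ) (k : ℕ) : rbinom x k = Ring.choose x k := by
  have h := Ring.descPochhammer_eq_factorial_smul_choose x k
  rw [← Polynomial.aeval_eq_smeval, Polynomial.aeval_def, ← Polynomial.eval_map,
    descPochhammer_map, descPochhammer_eval_eq_prod_range, nsmul_eq_mul] at h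
  rw [rbinom, h]
  field_simp

/-- Vandermonde's identity, with the binomial coefficients of `q` spelled out by factorials. -/
theorem sum_rbinom_div_factorial (x : ℝ) (r q : ℕ) :
    ∑ k ∈ Icc (r - q) r, rbinom x k / (((r - k).factorial : ℝ) * ((q + k - r).factorial : ℝ))
      = rbinom (x + q) r / (q.factorial : ℝ) := by
  have hV := Ring.add_choose_eq r (Commute.all x (q : ℝ))
  rw [rbinom_eq_choose, hV, Finset.Nat.sum_antidiagonal_eq_sum_range_succ_mk, Finset.sum_div]
  have hsub : Icc (r - q) r ⊆ range r.succ := fun k hk => by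
    simp only [mem_Icc, mem_range] at *; omega
  rw [← Finset.sum_subset hsub]
  · refine Finset.sum_congr rfl fun k hk => ?_
    rw [mem_Icc] at hk
    have hle : r - k ≤ q := by omega
    rw [rbinom_eq_choose, Ring.choose_natCast, Nat.cast_choose ℝ hle,
      show q + k - r = q - (r - k) by omega]
    field_simp
  · intro k hk hk'
    simp only [mem_Icc, mem_range] at hk hk'
    rw [Ring.choose_natCast, Nat.choose_eq_zero_of_lt (by omega)]
    simp

theorem factorial_mul_rbinom (x : ℝ) (k : ℕ) :
    (k.factorial : ℝ) * rbinom x k = ∏ i ∈ range k, (x - k + 1 + i) := by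
  rw [rbinom, mul_div_cancel₀ _ (by positivity), ← Finset.prod_range_reflect]
  refine Finset.prod_congr rfl fun i hi => ?_
  rw [mem_range] at hi
  rw [show k - 1 - i = k - (1 + i) by omega, Nat.cast_sub (by omega)]
  push_cast
  ring

theorem Gamma_add_natCast {y : ℝ} (hy : 0 < y) (k : ℕ) :
    Real.Gamma (y + k) = (∏ i ∈ range k, (y + i)) * Real.Gamma y := by
  induction k with
  | zero => simp
  | succ k ih =>
    rw [prod_range_succ, Nat.cast_succ, ← add_assoc, Real.Gamma_add_one (by positivity), ih]
    ring

theorem prod_erase_range_natCast_sub {M m : ℕ} (hm : m ≤ M) :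
    ∏ i ∈ (range (M + 1)).erase m, ((m : ℝ) - i)
      = (-1) ^ (M - m) * (m.factorial : ℝ) * ((M - m).factorial : ℝ) := by
  induction M, hm using Nat.le_induction with
  | base =>
    rw [range_add_one, erase_insert (by simp), Nat.sub_self]
    have h := factorial_mul_rbinom (m : ℝ) m
    rw [rbinom_eq_choose, Ring.choose_natCast, Nat.choose_self] at h
    rw [← Finset.prod_range_reflect]
    simp only [Nat.cast_one, mul_one] at h
    rw [h]
    simp only [pow_zero, Nat.factorial_zero, Nat.cast_one, one_mul, mul_one]
    refine Finset.prod_congr rfl fun i hi => ?_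
    rw [mem_range] at hi
    rw [show m - 1 - i = m - (1 + i) by omega, Nat.cast_sub (by omega)]
    push_cast
    ring
  | succ M hM ih =>
    rw [range_add_one, erase_insert_of_ne (by omega), prod_insert (by simp), ih,
      show M + 1 - m = (M - m) + 1 by omega, Nat.factorial_succ]
    push_cast [Nat.cast_sub hM]
    ring

/-- Lagrange interpolation of `P` at `0, …, M`, evaluated at `-b`. -/
theorem sum_eval_div_factorial {M : ℕ} (P : Polynomial ℝ) (hP : P.degree < (M + 1 : ℕ))
    {b : ℝ} (hb : 0 < b) :
    ∑ m ∈ range (M + 1), (-1) ^ m * P.eval (m : ℝ)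
        / ((m.factorial : ℝ) * ((M - m).factorial : ℝ) * (m + b))
      = P.eval (-b) / ∏ m ∈ range (M + 1), ((m : ℝ) + b) := by
  have hI := Lagrange.eq_interpolate (s := range (M + 1)) (v := fun i : ℕ => (i : ℝ)) (f := P)
    (by intro a _ c _ h; simpa using h) (by simpa using hP)
  have hnn : ∀ i : ℕ, ((i : ℝ) + b) ≠ 0 := fun i => by positivity
  have hE : P.eval (-b) = _ := (congrArg (Polynomial.eval (-b)) hI).trans
    (Lagrange.eval_interpolate_not_at_node _ fun i _ h => hnn i (by simp [← h]))
  have hprod : ∏ m ∈ range (M + 1), ((m : ℝ) + b) ≠ 0 := prod_ne_zero_iff.mpr fun i _ => hnn i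
  have hnod : ∏ i ∈ range (M + 1), (-b - (i : ℝ))
      = (-1) ^ (M + 1) * ∏ m ∈ range (M + 1), ((m : ℝ) + b) := by
    rw [← card_range (M + 1), ← prod_const, card_range, ← prod_mul_distrib]
    exact prod_congr rfl fun i _ => by ring
  rw [eq_div_iff hprod, hE, Lagrange.eval_nodal, hnod, mul_comm, mul_comm ((-1 : ℝ) ^ (M + 1)),
    mul_assoc, mul_sum (a := (-1 : ℝ) ^ (M + 1))]
  congr 1
  refine sum_congr rfl fun m hm => ?_
  have hm' : m ≤ M := by rw [mem_range] at hm; omega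
  rw [Lagrange.nodalWeight, prod_inv_distrib, prod_erase_range_natCast_sub hm',
    show -b - (m : ℝ) = -(m + b) by ring]
  obtain ⟨d, rfl⟩ := Nat.exists_eq_add_of_le hm'
  rw [Nat.add_sub_cancel_left]
  have := hnn m
  field_simp
  ring

theorem sum_rbinom_div_factorial_Gamma {h : ℝ} (hh : 0 < h) (j q m : ℕ) :
    ∑ k ∈ Icc (m - q) m, rbinom (h + 2 * j + m) k
        / (((m - k).factorial : ℝ) * ((q + k - m).factorial : ℝ)
          * Real.Gamma (h + 2 * j + m + q + 2))
      = 1 / ((q.factorial : ℝ) * (m.factorial : ℝ) * Real.Gamma (h + 2 * j + q + 1)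
          * (h + 2 * j + m + q + 1)) := by
  have hy : 0 < h + 2 * j + q + 1 := by positivity
  have hz : 0 < h + 2 * j + m + q + 1 := by positivity
  have hG : Real.Gamma (h + 2 * j + m + q + 2) = (h + 2 * j + m + q + 1)
      * (((m.factorial : ℝ) * rbinom (h + 2 * j + m + q) m) * Real.Gamma (h + 2 * j + q + 1)) := by
    rw [factorial_mul_rbinom, show h + 2 * j + m + q - m + 1 = h + 2 * j + q + 1 by ring,
      ← Gamma_add_natCast hy, show h + 2 * j + m + q + 2 = (h + 2 * j + m + q + 1) + 1 by ring,
      Real.Gamma_add_one hz.ne']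
    congr 2
    ring
  have hG0 : Real.Gamma (h + 2 * j + m + q + 2) ≠ 0 := (Real.Gamma_pos_of_pos (by positivity)).ne'
  simp_rw [← div_div _ _ (Real.Gamma (h + 2 * j + m + q + 2))]
  rw [← Finset.sum_div, sum_rbinom_div_factorial]
  have hr : rbinom (h + 2 * j + m + q) m ≠ 0 := fun h0 => hG0 (by rw [hG, h0]; simp)
  have hGy := (Real.Gamma_pos_of_pos hy).ne'
  rw [hG]
  field_simp

theorem sum_neg_one_pow_mul_prod_div {h : ℝ} (hh : 0 < h) {j q M : ℕ} (hq : q ≤ M) :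
    ∑ m ∈ range (M + 1), (-1) ^ m * (∏ i ∈ range (M + 1), (h + 2 * j + 1 + m + i))
        / ((m.factorial : ℝ) * ((M - m).factorial : ℝ) * (m + (h + j + 1 / 2))
          * (h + 2 * j + m + q + 1))
      = (∏ i ∈ (range (M + 1)).erase q, ((j + i : ℕ) + 1 / 2 : ℝ))
          / ∏ m ∈ range (M + 1), ((m : ℝ) + (h + j + 1 / 2)) := by
  have hqm : q ∈ range (M + 1) := by rw [mem_range]; omega
  set P : Polynomial ℝ := ∏ i ∈ (range (M + 1)).erase q,
    (Polynomial.X + Polynomial.C (h + 2 * j + 1 + i)) with hPdef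
  have hdeg : P.degree < (M + 1 : ℕ) := by
    rw [hPdef, Polynomial.degree_prod]
    simp only [Polynomial.degree_X_add_C, sum_const, card_erase_of_mem hqm, card_range]
    rw [nsmul_eq_mul, mul_one]
    exact_mod_cast Nat.lt_succ_self M
  have hS := sum_eval_div_factorial P hdeg (b := h + j + 1 / 2) (by positivity)
  have hev : P.eval (-(h + j + 1 / 2))
      = ∏ i ∈ (range (M + 1)).erase q, ((j + i : ℕ) + 1 / 2 : ℝ) := by
    rw [hPdef, Polynomial.eval_prod]
    refine prod_congr rfl fun i _ => ?_
    simp only [Polynomial.eval_add, Polynomial.eval_X, Polynomial.eval_C]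
    push_cast
    ring
  rw [← hev, ← hS]
  refine sum_congr rfl fun m _ => ?_
  have hz : (h + 2 * j + m + q + 1) ≠ 0 := by positivity
  have hw : (m + (h + j + 1 / 2)) ≠ 0 := by positivity
  have hm : P.eval (m : ℝ) = ∏ i ∈ (range (M + 1)).erase q, (h + 2 * j + 1 + m + i) := by
    rw [hPdef, Polynomial.eval_prod]
    refine prod_congr rfl fun i _ => ?_
    simp only [Polynomial.eval_add, Polynomial.eval_X, Polynomial.eval_C]
    ring
  rw [← mul_prod_erase _ _ hqm, ← hm]
  field_simp
  ring

theorem rbinom_div_rbinom_mul_prod {h : ℝ} (hh : 0 < h) {j q M : ℕ} (hq : q ≤ M) :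
    rbinom (((j + 1 + M : ℕ) : ℝ) + h - 1 / 2) (j + 1 + M)
        / rbinom (((j + 1 + M : ℕ) : ℝ) - 1 / 2) (j + 1 + M)
        * ((∏ i ∈ (range (M + 1)).erase q, ((j + i : ℕ) + 1 / 2 : ℝ))
          / ∏ m ∈ range (M + 1), ((m : ℝ) + (h + j + 1 / 2)))
      = (∏ i ∈ range j, ((i : ℝ) + h + 1 / 2))
          / ((∏ i ∈ range j, ((i : ℝ) + 1 / 2)) * ((j + q : ℕ) + 1 / 2)) := by
  have hqm : q ∈ range (M + 1) := by rw [mem_range]; omega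
  have key : ∀ x : ℝ, ((j + 1 + M).factorial : ℝ)
      * rbinom (((j + 1 + M : ℕ) : ℝ) + x - 1 / 2) (j + 1 + M)
      = (∏ i ∈ range j, ((i : ℝ) + x + 1 / 2))
        * ∏ i ∈ range (M + 1), (((j + i : ℕ) : ℝ) + x + 1 / 2) := by
    intro x
    rw [factorial_mul_rbinom, ← prod_range_add (fun i : ℕ => (i : ℝ) + x + 1 / 2) j (M + 1),
      show j + 1 + M = j + (M + 1) by ring]
    exact prod_congr rfl fun i _ => by ring
  have h1 := key h
  have h0 := key 0
  simp only [add_zero] at h0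
  have e : ∏ m ∈ range (M + 1), ((m : ℝ) + (h + j + 1 / 2))
      = ∏ i ∈ range (M + 1), (((j + i : ℕ) : ℝ) + h + 1 / 2) :=
    prod_congr rfl fun i _ => by push_cast; ring
  have n1 : ∏ i ∈ range (M + 1), (((j + i : ℕ) : ℝ) + h + 1 / 2) ≠ 0 :=
    (prod_pos fun i _ => by positivity).ne'
  have n2 : ∏ i ∈ range j, ((i : ℝ) + 1 / 2) ≠ 0 := (prod_pos fun i _ => by positivity).ne'
  have n3 : ∏ i ∈ (range (M + 1)).erase q, ((j + i : ℕ) + 1 / 2 : ℝ) ≠ 0 :=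
    (prod_pos fun i _ => by positivity).ne'
  have n4 : ((j + q : ℕ) + 1 / 2 : ℝ) ≠ 0 := by positivity
  rw [← mul_div_mul_left _ _ (show ((j + 1 + M).factorial : ℝ) ≠ 0 by positivity), h1, h0, e,
    ← mul_prod_erase _ (fun i : ℕ => (((j + i : ℕ) : ℝ) + 1 / 2)) hqm]
  generalize (∏ i ∈ range (M + 1), (((j + i : ℕ) : ℝ) + h + 1 / 2)) = A at *
  generalize (∏ i ∈ (range (M + 1)).erase q, ((j + i : ℕ) + 1 / 2 : ℝ)) = B at *
  generalize ((j + q : ℕ) + 1 / 2 : ℝ) = D at *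
  generalize (∏ i ∈ range j, ((i : ℝ) + 1 / 2)) = F at *
  generalize (∏ i ∈ range j, ((i : ℝ) + h + 1 / 2)) = G at *
  field_simp

/-- The factor of a summand of `aCoef n N p u` that depends only on `n`, `j` and `p`. -/
noncomputable def summandConst (n j p : ℕ) : ℂ :=
  Complex.I * ((cConst n : ℝ) : ℂ) * gammaConst n j * ((n : ℂ) - 1)
    / (((2 : ℝ) ^ (2 * (p : ℝ) + 1 + (n : ℝ) / 2) : ℝ) : ℂ)

theorem summand_eq (n : ℕ) {j q M m k : ℕ} (hm : m ≤ M) (hk : k ∈ Icc (m - q) m) :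
    cCoef n (j + 1 + M) (j + 1 + M + (j + 1 + m)) j k * (-1 : ℂ) ^ (j + q + 1 + k - (j + 1 + m))
        / ((((j + q + 1 + k - (j + 1 + m)).factorial : ℝ) : ℂ)
            * ((Real.Gamma ((n : ℝ) / 2 + (j + 1 + m : ℕ) + (j + q : ℕ) + 1) : ℝ) : ℂ)
            * (((2 : ℝ) ^ (2 * ((j + q : ℕ) : ℝ) + 1 + (n : ℝ) / 2 + k) : ℝ) : ℂ))
      = summandConst n j (j + q) *
        (((-1) ^ q * (rbinom (((j + 1 + M : ℕ) : ℝ) + (n : ℝ) / 2 - 1 / 2) (j + 1 + M)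
            / rbinom (((j + 1 + M : ℕ) : ℝ) - 1 / 2) (j + 1 + M))
          * ((-1) ^ m * (∏ i ∈ range (M + 1), ((n : ℝ) / 2 + 2 * j + 1 + m + i))
            / (((M - m).factorial : ℝ) * (m + ((n : ℝ) / 2 + j + 1 / 2)))
          * (rbinom ((n : ℝ) / 2 + 2 * j + m) k
        / (((m - k).factorial : ℝ) * ((q + k - m).factorial : ℝ)
          * Real.Gamma ((n : ℝ) / 2 + 2 * j + m + q + 2)))) : ℝ) : ℂ) := by
  rw [mem_Icc] at hk
  have hsgn : (-1 : ℂ) ^ (q + k - m) = (-1) ^ k * ((-1) ^ q * (-1) ^ m) := by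
    obtain ⟨d, hd⟩ : ∃ d, q + k = m + d := ⟨q + k - m, by omega⟩
    have hqk : (-1 : ℂ) ^ k * (-1) ^ q = (-1) ^ m * (-1) ^ d := by
      rw [← pow_add, ← pow_add, add_comm k, hd]
    have hmm : (-1 : ℂ) ^ m * (-1) ^ m = 1 := by rw [← mul_pow]; simp
    rw [hd, Nat.add_sub_cancel_left]
    linear_combination (-(-1 : ℂ) ^ m) * hqk - (-1 : ℂ) ^ d * hmm
  have hkk : (-1 : ℂ) ^ k * (-1) ^ k = 1 := by rw [← mul_pow]; simp
  have hprod : ((j + 1 + M - j).factorial : ℝ)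
      * rbinom (((j + 1 + M + (j + 1 + m) : ℕ) : ℝ) - 1 + (n : ℝ) / 2) (j + 1 + M - j)
      = ∏ i ∈ range (M + 1), ((n : ℝ) / 2 + 2 * j + 1 + m + i) := by
    rw [factorial_mul_rbinom, show j + 1 + M - j = M + 1 by omega]
    exact prod_congr rfl fun i _ => by push_cast; ring
  have hpow : (2 : ℝ) ^ (2 * ((j + q : ℕ) : ℝ) + 1 + (n : ℝ) / 2 + k)
      = 2 ^ (2 * ((j + q : ℕ) : ℝ) + 1 + (n : ℝ) / 2) * 2 ^ k := by
    rw [Real.rpow_add (by norm_num), Real.rpow_natCast]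
  rw [cCoef, summandConst, hpow, ← hprod,
    show j + q + 1 + k - (j + 1 + m) = q + k - m by omega, hsgn,
    show 2 * (j + 1 + M) - (j + 1 + M + (j + 1 + m)) = M - m by omega,
    show j + 1 + M + (j + 1 + m) - (j + 1 + M) - j - 1 - k = m - k by omega,
    show (n : ℝ) / 2 + j + (j + 1 + M + (j + 1 + m) : ℕ) - (j + 1 + M : ℕ) - 1
      = (n : ℝ) / 2 + 2 * j + m by push_cast; ring,
    show ((j + 1 + M + (j + 1 + m) : ℕ) : ℝ) - (j + 1 + M : ℕ) + (n : ℝ) / 2 - 1 / 2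
      = m + ((n : ℝ) / 2 + j + 1 / 2) by push_cast; ring,
    show (n : ℝ) / 2 + (j + 1 + m : ℕ) + (j + q : ℕ) + 1
      = (n : ℝ) / 2 + 2 * j + m + q + 2 by push_cast; ring]
  have h2 : (2 : ℂ) ^ k ≠ 0 := pow_ne_zero _ two_ne_zero
  simp only [Complex.ofReal_mul, Complex.ofReal_div, Complex.ofReal_pow, Complex.ofReal_neg,
    Complex.ofReal_one, Complex.ofReal_ofNat]
  generalize (2 : ℂ) ^ k = t at *
  generalize (-1 : ℂ) ^ k = e at *
  refine (?_ : _ = _ * (e * e * (t * t⁻¹))).trans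
    (by rw [hkk, mul_inv_cancel₀ h2, mul_one, mul_one])
  ring

theorem inner_sum_eq {n : ℕ} (hn : 2 ≤ n) {j q M : ℕ} (hq : q ≤ M) :
    ∑ s ∈ Icc (j + 1) (j + 1 + M), ∑ k ∈ Icc (s - (j + q) - 1) (s - j - 1),
      cCoef n (j + 1 + M) (j + 1 + M + s) j k * (-1 : ℂ) ^ (j + q + 1 + k - s)
        / ((((j + q + 1 + k - s).factorial : ℝ) : ℂ)
            * ((Real.Gamma ((n : ℝ) / 2 + s + (j + q : ℕ) + 1) : ℝ) : ℂ)
            * (((2 : ℝ) ^ (2 * ((j + q : ℕ) : ℝ) + 1 + (n : ℝ) / 2 + k) : ℝ) : ℂ))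
      = summandConst n j (j + q) *
        (((-1) ^ q / ((q.factorial : ℝ) * Real.Gamma ((n : ℝ) / 2 + 2 * j + q + 1))
          * ((∏ i ∈ range j, ((i : ℝ) + (n : ℝ) / 2 + 1 / 2))
          / ((∏ i ∈ range j, ((i : ℝ) + 1 / 2)) * ((j + q : ℕ) + 1 / 2))) : ℝ) : ℂ) := by
  have hh : (0 : ℝ) < (n : ℝ) / 2 := by positivity
  rw [← rbinom_div_rbinom_mul_prod hh hq, ← sum_neg_one_pow_mul_prod_div hh hq,
    ← Ico_add_one_right_eq_Icc, sum_Ico_eq_sum_range,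
    show j + 1 + M + 1 - (j + 1) = M + 1 by omega, mul_sum, mul_sum, Complex.ofReal_sum, mul_sum]
  refine sum_congr rfl fun m hm => ?_
  have hm' : m ≤ M := by rw [mem_range] at hm; omega
  rw [show j + 1 + m - (j + q) - 1 = m - q by omega, show j + 1 + m - j - 1 = m by omega,
    sum_congr rfl fun k hk => summand_eq n hm' hk, ← mul_sum, ← Complex.ofReal_sum, ← mul_sum,
    ← mul_sum, sum_rbinom_div_factorial_Gamma hh]
  congr 2
  simp only [div_eq_mul_inv, mul_inv]
  ring

theorem aCoef_eq_sum {n : ℕ} (hn : 2 ≤ n) {N p : ℕ} (hp : p + 1 ≤ N) (u : ℕ → ℂ) :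
    aCoef n N p u = ∑ j ∈ range (p + 1), u j * (summandConst n j p *
        (((-1) ^ (p - j) / (((p - j).factorial : ℝ)
            * Real.Gamma ((n : ℝ) / 2 + 2 * j + (p - j : ℕ) + 1))
          * ((∏ i ∈ range j, ((i : ℝ) + (n : ℝ) / 2 + 1 / 2))
          / ((∏ i ∈ range j, ((i : ℝ) + 1 / 2)) * (p + 1 / 2))) : ℝ) : ℂ)) := by
  rw [aCoef, ← sum_subset (range_subset_range.mpr hp)]
  · refine sum_congr rfl fun j hj => ?_
    rw [mem_range] at hj
    obtain ⟨q, rfl⟩ := Nat.exists_eq_add_of_le (show j ≤ p by omega)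
    obtain ⟨M, rfl⟩ := Nat.exists_eq_add_of_le (show j + 1 ≤ N by omega)
    rw [inner_sum_eq hn (show q ≤ M by omega), Nat.add_sub_cancel_left]
  · intro j _ hj
    rw [mem_range] at hj
    refine mul_eq_zero_of_right _ (sum_eq_zero fun s hs => ?_)
    rw [mem_Icc] at hs
    rw [Icc_eq_empty (by omega), sum_empty]

theorem stmt9 (n N p : ℕ) (hn : 2 ≤ n) (hN : 1 ≤ N) (hp : p + 1 ≤ N) (u : ℕ → ℂ) :
    aCoef n N p u = aCoef n (p + 1) p u := by
  rw [aCoef_eq_sum hn hp, aCoef_eq_sum hn le_rfl]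
end

section
/- Let g : ℝ → ℝ be defined by g(y) = log( |y| / |y−1| ) for y ∉ {0,1} and g(0) = g(1) = 0, and define F : ℝ → [0, ∞] by F(x) = sup_{ε>0} | ∫_{{y : |y−x| > ε}} g(y) / (y−x) dy |. Then F is not in weak L¹(ℝ): sup_{t>0} t · volume( { x ∈ ℝ : F(x) > t } ) = ∞, i.e., for every C > 0 there exists t > 0 with t · volume( { x ∈ ℝ : F(x) > t } ) > C. -/
open MeasureTheory ENNReal

/-- `g(y) = log(|y|/|y−1|)`; with Mathlib's conventions (`x/0 = 0`, `Real.log 0 = 0`)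
this function takes the value `0` at `y = 0` and `y = 1`. -/
noncomputable def gfun (y : ℝ) : ℝ := Real.log (|y| / |y - 1|)

/-- The maximal Hilbert transform of `gfun`, as a function with values in `[0,∞]`. -/
noncomputable def Fmax (x : ℝ) : ℝ≥0∞ :=
  ⨆ (ε : ℝ) (_ : 0 < ε),
    ENNReal.ofReal |∫ y in {y : ℝ | ε < |y - x|}, gfun y / (y - x)|

lemma gfun_eq_sub {y : ℝ} (h0 : y ≠ 0) (h1 : y ≠ 1) :
    gfun y = Real.log y - Real.log (y - 1) := by
  have h1' : y - 1 ≠ 0 := sub_ne_zero.mpr h1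
  rw [gfun, Real.log_div (abs_ne_zero.mpr h0) (abs_ne_zero.mpr h1'), Real.log_abs, Real.log_abs]

lemma measurable_gfun : Measurable gfun := by
  unfold gfun
  fun_prop

lemma gfun_nonpos {y : ℝ} (hy : y ≤ 1 / 2) : gfun y ≤ 0 := by
  refine Real.log_nonpos (by positivity) (div_le_one_of_le₀ ?_ (abs_nonneg _))
  rw [abs_of_neg (by linarith : y - 1 < 0)]
  exact abs_le.mpr ⟨by linarith, by linarith⟩

lemma gfun_nonneg {y : ℝ} (hy : 1 < y) : 0 ≤ gfun y := by
  refine Real.log_nonneg ?_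
  rw [abs_of_pos (by linarith : 0 < y), abs_of_pos (by linarith : 0 < y - 1),
    one_le_div (by linarith)]
  linarith

lemma gfun_le_inv {y : ℝ} (hy : 1 < y) : gfun y ≤ (y - 1)⁻¹ := by
  have hy' : 0 < y - 1 := by linarith
  have h := Real.log_le_sub_one_of_pos (div_pos (by linarith : 0 < y) hy')
  rw [gfun, abs_of_pos (by linarith : 0 < y), abs_of_pos hy']
  refine h.trans (le_of_eq ?_)
  field_simp
  ring

lemma inv_le_gfun {y : ℝ} (hy : y < 0) : y⁻¹ ≤ gfun y := by
  have hy' : y - 1 < 0 := by linarith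
  have h := Real.one_sub_inv_le_log_of_pos (div_pos (neg_pos.mpr hy) (neg_pos.mpr hy'))
  rw [gfun, abs_of_neg hy, abs_of_neg hy']
  refine (le_of_eq ?_).trans h
  have hy0 : y ≠ 0 := hy.ne
  have hy1 : y - 1 ≠ 0 := hy'.ne
  rw [neg_div_neg_eq]
  field_simp
  ring

lemma gfun_le_half_inv {y : ℝ} (hy : y ≤ -1) : gfun y ≤ y⁻¹ / 2 := by
  have hy0 : y < 0 := by linarith
  have hy' : y - 1 < 0 := by linarith
  have h := Real.log_le_sub_one_of_pos (div_pos (neg_pos.mpr hy0) (neg_pos.mpr hy'))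
  rw [gfun, abs_of_neg hy0, abs_of_neg hy']
  refine h.trans ?_
  have e : -y / -(y - 1) - 1 - y⁻¹ / 2 = (y + 1) / (2 * (y * (y - 1))) := by
    have hy0' : y ≠ 0 := hy0.ne
    have hy1 : y - 1 ≠ 0 := hy'.ne
    rw [neg_div_neg_eq]
    field_simp
    ring
  have : (y + 1) / (2 * (y * (y - 1))) ≤ 0 :=
    div_nonpos_of_nonpos_of_nonneg (by linarith) (by nlinarith)
  linarith

lemma setOf_lt_abs_sub_eq (x : ℝ) :
    {y : ℝ | x - 1 / 2 < |y - x|} = Set.Iio (1 / 2) ∪ Set.Ioi (2 * x - 1 / 2) := by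
  ext y
  simp only [Set.mem_ofPred_eq, lt_abs, Set.mem_union, Set.mem_Iio, Set.mem_Ioi]
  constructor
  · rintro (h | h)
    · right; linarith
    · left; linarith
  · rintro (h | h)
    · right; linarith
    · left; linarith

lemma integrableOn_gfun_div_of_le {s : Set ℝ} (hs : MeasurableSet s) (x K : ℝ)
    (h : ∀ y ∈ s, |gfun y / (y - x)| ≤ K * (1 + y ^ 2)⁻¹) :
    IntegrableOn (fun y => gfun y / (y - x)) s := by
  refine Integrable.mono' ((integrable_inv_one_add_sq.const_mul K).integrableOn) ?_ ?_
  · exact (measurable_gfun.div (measurable_id.sub_const x)).aestronglyMeasurable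
  · exact (ae_restrict_iff' hs).mpr (Filter.Eventually.of_forall h)

lemma integrableOn_gfun_div (x : ℝ) (hx : 2 ≤ x) :
    IntegrableOn (fun y => gfun y / (y - x)) {y : ℝ | x - 1 / 2 < |y - x|} := by
  have left_tail : IntegrableOn (fun y => gfun y / (y - x)) (Set.Iic (-1)) := by
    refine integrableOn_gfun_div_of_le measurableSet_Iic x 2 fun y hy => ?_
    have hy : y ≤ -1 := hy
    have hy0 : y < 0 := by linarith
    have hg : |gfun y| ≤ (-y)⁻¹ := by
      rw [abs_of_nonpos (gfun_nonpos (by linarith)), inv_neg]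
      exact neg_le_neg (inv_le_gfun hy0)
    rw [abs_div, abs_of_neg (by linarith : y - x < 0)]
    calc |gfun y| / -(y - x) ≤ (-y)⁻¹ / (-y) := by
          have hinv : 0 ≤ (-y)⁻¹ := inv_nonneg.mpr (by linarith)
          gcongr <;> linarith
      _ ≤ 2 * (1 + y ^ 2)⁻¹ := by
          rw [div_eq_mul_inv, ← mul_inv, ← div_eq_mul_inv, inv_eq_one_div,
            div_le_div_iff₀ (by nlinarith) (by positivity)]
          nlinarith
  have middle : IntegrableOn (fun y => gfun y / (y - x)) (Set.Ioc (-1) (1 / 2)) := by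
    have hlog : IntervalIntegrable (fun y => Real.log y - Real.log (y - 1)) volume (-1) (1 / 2) := by
      refine intervalIntegral.intervalIntegrable_log'.sub ?_
      have := (intervalIntegral.intervalIntegrable_log' (a := -1 - 1) (b := 1 / 2 - 1)).comp_sub_right 1
      simpa using this
    have hprod := hlog.mul_continuousOn (g := fun y => (y - x)⁻¹) (by
      refine ContinuousOn.inv₀ (by fun_prop) fun y hy => ?_
      rw [Set.uIcc_of_le (by norm_num)] at hy
      have := hy.2
      exact ne_of_lt (by linarith))
    rw [intervalIntegrable_iff_integrableOn_Ioc_of_le (by norm_num)] at hprod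
    refine hprod.congr ?_
    have hne : ∀ᵐ y ∂(volume.restrict (Set.Ioc (-1 : ℝ) (1 / 2))), y ≠ 0 :=
      ae_restrict_of_ae (Measure.ae_ne volume 0)
    filter_upwards [hne, ae_restrict_mem measurableSet_Ioc] with y hy0 hy
    have := hy.2
    rw [gfun_eq_sub hy0 (ne_of_lt (by linarith)), div_eq_mul_inv]
  have right_tail : IntegrableOn (fun y => gfun y / (y - x)) (Set.Ioi (2 * x - 1 / 2)) := by
    refine integrableOn_gfun_div_of_le measurableSet_Ioi x 16 fun y hy => ?_
    have hy : 2 * x - 1 / 2 < y := hy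
    have hg : |gfun y| ≤ (y / 2)⁻¹ := by
      rw [abs_of_nonneg (gfun_nonneg (by linarith))]
      refine (gfun_le_inv (by linarith)).trans ?_
      gcongr <;> linarith
    have hyp : 0 < y := by linarith
    rw [abs_div, abs_of_pos (by linarith : 0 < y - x)]
    calc |gfun y| / (y - x) ≤ (y / 2)⁻¹ / (y / 4) := by
          gcongr
          linarith
      _ = 8 / y ^ 2 := by field_simp; norm_num
      _ ≤ 16 * (1 + y ^ 2)⁻¹ := by
          rw [← div_eq_mul_inv, div_le_div_iff₀ (by positivity) (by positivity)]
          nlinarith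
  rw [setOf_lt_abs_sub_eq x]
  refine IntegrableOn.union ((left_tail.union middle).mono_set fun y hy => ?_) right_tail
  rcases le_or_gt y (-1) with h | h
  · exact Or.inl h
  · exact Or.inr ⟨h, le_of_lt hy⟩

lemma gfun_div_nonneg (x : ℝ) (hx : 2 ≤ x) {y : ℝ} (hy : y ∈ {y : ℝ | x - 1 / 2 < |y - x|}) :
    0 ≤ gfun y / (y - x) := by
  rw [setOf_lt_abs_sub_eq x] at hy
  rcases hy with hy | hy
  · have hy : y < 1 / 2 := hy
    exact div_nonneg_of_nonpos (gfun_nonpos hy.le) (by linarith)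
  · have hy : 2 * x - 1 / 2 < y := hy
    exact div_nonneg (gfun_nonneg (by linarith)) (by linarith)

lemma log_div_le_setIntegral (x : ℝ) (hx : 2 ≤ x) :
    Real.log x / (4 * x) ≤ ∫ y in {y : ℝ | x - 1 / 2 < |y - x|}, gfun y / (y - x) := by
  have hint := integrableOn_gfun_div x hx
  have hmeas : MeasurableSet {y : ℝ | x - 1 / 2 < |y - x|} :=
    measurableSet_lt measurable_const (by fun_prop)
  have hsub : Set.Ioc (-x) (-1) ⊆ {y : ℝ | x - 1 / 2 < |y - x|} := fun y hy => by
    have := hy.2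
    rw [setOf_lt_abs_sub_eq x]
    exact Or.inl (by rw [Set.mem_Iio]; linarith)
  have hinv : IntervalIntegrable (fun y : ℝ => y⁻¹ * (-(4 * x)⁻¹)) volume (-x) (-1) := by
    refine ContinuousOn.intervalIntegrable (ContinuousOn.mul (continuousOn_inv₀.mono ?_)
      continuousOn_const)
    intro y hy
    rw [Set.uIcc_of_le (by linarith)] at hy
    have := hy.2
    exact ne_of_lt (by linarith)
  calc Real.log x / (4 * x) = ∫ y in (-x)..(-1), y⁻¹ * (-(4 * x)⁻¹) := by
        rw [intervalIntegral.integral_mul_const, integral_inv_of_neg (by linarith) (by norm_num),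
          neg_div_neg_eq, one_div, Real.log_inv]
        ring
    _ = ∫ y in Set.Ioc (-x) (-1), y⁻¹ * (-(4 * x)⁻¹) :=
        intervalIntegral.integral_of_le (by linarith)
    _ ≤ ∫ y in Set.Ioc (-x) (-1), gfun y / (y - x) := by
        refine setIntegral_mono_on
          ((intervalIntegrable_iff_integrableOn_Ioc_of_le (by linarith)).mp hinv)
          (hint.mono_set hsub) measurableSet_Ioc fun y hy => ?_
        have hy1 := hy.1
        have hy2 := hy.2
        have hg := gfun_le_half_inv hy2
        have hyinv : y⁻¹ < 0 := inv_lt_zero.mpr (by linarith)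
        calc y⁻¹ * (-(4 * x)⁻¹) = (-(y⁻¹ / 2)) / (2 * x) := by field_simp; norm_num
          _ ≤ (-gfun y) / (x - y) := by
              have : 0 ≤ -(y⁻¹ / 2) := by linarith
              gcongr <;> linarith
          _ = gfun y / (y - x) := by rw [← neg_sub y x, neg_div_neg_eq]
    _ ≤ _ := setIntegral_mono_set hint
        ((ae_restrict_iff' hmeas).mpr
          (Filter.Eventually.of_forall fun y hy => gfun_div_nonneg x hx hy))
        hsub.eventuallyLE

/-- The truncation at radius `x - 1 / 2` shows that `Fmax x` is at least of size `log x / x`. -/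
lemma ofReal_log_div_le_Fmax (x : ℝ) (hx : 2 ≤ x) :
    ENNReal.ofReal (Real.log x / (4 * x)) ≤ Fmax x := by
  refine le_iSup₂_of_le (x - 1 / 2) (by linarith) (ENNReal.ofReal_le_ofReal ?_)
  exact (log_div_le_setIntegral x hx).trans (le_abs_self _)

theorem stmt14 :
    ∀ C : ℝ, 0 < C → ∃ t : ℝ, 0 < t ∧
      ENNReal.ofReal C
        < ENNReal.ofReal t * volume {x : ℝ | ENNReal.ofReal t < Fmax x} := by
  intro C hC
  obtain ⟨a, ha, hlog⟩ : ∃ a : ℝ, 2 ≤ a ∧ Real.log a = 16 * (C + 1) :=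
    ⟨Real.exp (16 * (C + 1)), by linarith [Real.add_one_le_exp (16 * (C + 1))], Real.log_exp _⟩
  have ha0 : 0 < a := by linarith
  have ht : 0 < (C + 1) / a := by positivity
  refine ⟨(C + 1) / a, ht, ?_⟩
  have hsub : Set.Icc a (2 * a) ⊆ {x : ℝ | ENNReal.ofReal ((C + 1) / a) < Fmax x} := by
    rintro x ⟨hx1, hx2⟩
    refine lt_of_lt_of_le ?_ (ofReal_log_div_le_Fmax x (by linarith))
    have hx0 : 0 < x := by linarith
    have hlogx := Real.log_le_log ha0 hx1
    rw [ENNReal.ofReal_lt_ofReal_iff_of_nonneg ht.le, div_lt_div_iff₀ ha0 (by positivity)]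
    nlinarith
  calc ENNReal.ofReal C < ENNReal.ofReal (C + 1) :=
        (ENNReal.ofReal_lt_ofReal_iff (by linarith)).mpr (by linarith)
    _ = ENNReal.ofReal ((C + 1) / a) * volume (Set.Icc a (2 * a)) := by
        rw [Real.volume_Icc, ← ENNReal.ofReal_mul ht.le]
        congr 1
        field_simp
        ring
    _ ≤ _ := by gcongr
end
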